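/- Let A ∈ ℝ^{m×n}, η ∈ ℝ^m, let k and q be positive integers, set t = ⌈q/k⌉, and let δ₁ ≤ δ₃ be restricted isometry constants of orders k and 3k for A. Let v ∈ ℝⁿ be 2k-sparse and let Ω ⊆ {1,…,n} be an index set with |Ω| ≤ q. Then ‖((I − AᵀA)v + Aᵀη)_Ω‖₂ ≤ t·δ₃·‖v‖₂ + t·√(1+δ₁)·‖η‖₂. -/

import Mathlib

/-!
Write `z = (I - AᵀA)v + Aᵀη`. If `S` has at most `k` indices and `u = z_S`, then
`‖u‖² = ⟨u, z⟩ = (⟨u, v⟩ - ⟨Au, Av⟩) + ⟨Au, η⟩`. Every combination of `u` and `v` is `3k`-sparse, so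
polarising the restricted isometry inequality bounds the bracket by `δ₃‖u‖‖v‖`
(`dot_sub_dot_mulVec_le`), and Cauchy–Schwarz with the order-`k` isometry bounds the last term by
`√(1+δ₁)‖u‖‖η‖`. Cancelling `‖u‖` gives `‖z_S‖ ≤ C` with `C = δ₃‖v‖ + √(1+δ₁)‖η‖`
(`nrm_restr_block_le`). Since `q ≤ tk`, the set `Ω` splits into `t` blocks of at most `k` indices, and
the triangle inequality yields `‖z_Ω‖ ≤ tC` (`nrm_restr_le_mul`).
-/

open Matrix Finset Filter

/-- Euclidean (ℓ₂) norm of a vector. -/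
noncomputable def nrm {n : ℕ} (x : Fin n → ℝ) : ℝ := Real.sqrt (∑ i, x i ^ 2)

/-- A vector is `s`-sparse if it has at most `s` nonzero entries. -/
def sparse {n : ℕ} (s : ℕ) (x : Fin n → ℝ) : Prop :=
  ((Finset.univ : Finset (Fin n)).filter fun i => x i ≠ 0).card ≤ s

/-- Support of a vector, as a finset. -/
noncomputable def suppF {n : ℕ} (x : Fin n → ℝ) : Finset (Fin n) :=
  (Finset.univ : Finset (Fin n)).filter fun i => x i ≠ 0

/-- Restriction of a vector to an index set (zero outside). -/
def restr {n : ℕ} (x : Fin n → ℝ) (Ω : Finset (Fin n)) : Fin n → ℝ :=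
  fun i => if i ∈ Ω then x i else 0

/-- `δ ∈ [0,1)` is a restricted isometry constant of order `s` for `A`. -/
def RIC {m n : ℕ} (A : Matrix (Fin m) (Fin n) ℝ) (s : ℕ) (δ : ℝ) : Prop :=
  0 ≤ δ ∧ δ < 1 ∧ ∀ x : Fin n → ℝ, sparse s x →
    (1 - δ) * nrm x ^ 2 ≤ nrm (A.mulVec x) ^ 2 ∧
      nrm (A.mulVec x) ^ 2 ≤ (1 + δ) * nrm x ^ 2

/-- `h` is a hard thresholding of `z` at level `q` with support `Ω`. -/
def IsHT {n : ℕ} (q : ℕ) (z h : Fin n → ℝ) (Ω : Finset (Fin n)) : Prop :=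
  Ω.card = q ∧ (∀ i ∈ Ω, h i = z i) ∧ (∀ i ∉ Ω, h i = 0) ∧
    ∀ i ∈ Ω, ∀ j ∉ Ω, |z j| ≤ |z i|

theorem nrm_eq_norm {n : ℕ} (x : Fin n → ℝ) : nrm x = ‖WithLp.toLp 2 x‖ := by
  simp [nrm, EuclideanSpace.norm_eq]

theorem nrm_nonneg {n : ℕ} (x : Fin n → ℝ) : 0 ≤ nrm x := Real.sqrt_nonneg _

theorem nrm_sq {n : ℕ} (x : Fin n → ℝ) : nrm x ^ 2 = x ⬝ᵥ x := by
  rw [nrm, Real.sq_sqrt (Finset.sum_nonneg fun i _ => sq_nonneg _)]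
  simp [dotProduct, sq]

theorem nrm_add_le {n : ℕ} (x y : Fin n → ℝ) : nrm (x + y) ≤ nrm x + nrm y := by
  simp only [nrm_eq_norm, WithLp.toLp_add]
  exact norm_add_le _ _

theorem dot_le_nrm_mul_nrm {n : ℕ} (x y : Fin n → ℝ) : x ⬝ᵥ y ≤ nrm x * nrm y := by
  have h := Finset.sum_mul_sq_le_sq_mul_sq Finset.univ x y
  refine le_trans (Real.le_sqrt_of_sq_le h) ?_
  rw [Real.sqrt_mul (Finset.sum_nonneg fun i _ => sq_nonneg _)]
  exact le_rfl

theorem eq_zero_of_nrm_eq_zero {n : ℕ} {x : Fin n → ℝ} (h : nrm x = 0) : x = 0 := by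
  have h2 := nrm_sq x
  rw [h] at h2
  exact dotProduct_self_eq_zero.1 (by linarith)

theorem sparse_restr {n : ℕ} {s : ℕ} (x : Fin n → ℝ) {S : Finset (Fin n)} (hS : S.card ≤ s) :
    sparse s (restr x S) := by
  refine le_trans (Finset.card_le_card fun i hi => ?_) hS
  by_contra h
  simp [restr, h] at hi

theorem sparse_comb {n : ℕ} {r s : ℕ} {u v : Fin n → ℝ} (hu : sparse r u) (hv : sparse s v)
    (a b : ℝ) : sparse (r + s) (a • u + b • v) := by
  refine le_trans (Finset.card_le_card (t := Finset.univ.filter (fun i => u i ≠ 0) ∪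
    Finset.univ.filter (fun i => v i ≠ 0)) fun i hi => ?_)
    (le_trans (Finset.card_union_le _ _) (Nat.add_le_add hu hv))
  by_contra h
  simp only [Finset.mem_union, Finset.mem_filter, Finset.mem_univ, true_and, not_or,
    not_not] at h
  simp [h.1, h.2] at hi

/-- A restricted isometry of order `r + s` almost preserves inner products of an `r`-sparse and an
`s`-sparse vector. -/
theorem dot_sub_dot_mulVec_le {m n r s : ℕ} {A : Matrix (Fin m) (Fin n) ℝ} {δ : ℝ}
    (h : RIC A (r + s) δ) {u v : Fin n → ℝ} (hu : sparse r u) (hv : sparse s v) :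
    u ⬝ᵥ v - A.mulVec u ⬝ᵥ A.mulVec v ≤ δ * nrm u * nrm v := by
  rcases (nrm_nonneg u).eq_or_lt with hu0 | hu0
  · rw [eq_zero_of_nrm_eq_zero hu0.symm]
    simp [nrm]
  rcases (nrm_nonneg v).eq_or_lt with hv0 | hv0
  · rw [eq_zero_of_nrm_eq_zero hv0.symm]
    simp [nrm]
  -- The weights make `‖v‖u` and `‖u‖v` equally long, which is where polarisation is sharp.
  have hp := (h.2.2 _ (sparse_comb hu hv (nrm v) (nrm u))).1
  have hm := (h.2.2 _ (sparse_comb hu hv (nrm v) (-nrm u))).2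
  have hus := nrm_sq u
  have hvs := nrm_sq v
  simp only [nrm_sq, mulVec_add, mulVec_smul, add_dotProduct, dotProduct_add, smul_dotProduct,
    dotProduct_smul, smul_eq_mul, dotProduct_comm v u,
    dotProduct_comm (A.mulVec v) (A.mulVec u)] at hp hm
  rw [← hus, ← hvs] at hp hm
  have hpos : 0 < nrm u * nrm v := mul_pos hu0 hv0
  refine le_of_mul_le_mul_left ?_ hpos
  linarith

theorem nrm_restr_block_le {m n k : ℕ} {A : Matrix (Fin m) (Fin n) ℝ} (η : Fin m → ℝ)
    {δ₁ δ₃ : ℝ} (h1 : RIC A k δ₁) (h3 : RIC A (3 * k) δ₃) {v : Fin n → ℝ}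
    (hv : sparse (2 * k) v) {S : Finset (Fin n)} (hS : S.card ≤ k) :
    nrm (restr (((1 : Matrix (Fin n) (Fin n) ℝ) - Aᵀ * A).mulVec v + Aᵀ.mulVec η) S) ≤
      δ₃ * nrm v + Real.sqrt (1 + δ₁) * nrm η := by
  set z := ((1 : Matrix (Fin n) (Fin n) ℝ) - Aᵀ * A).mulVec v + Aᵀ.mulVec η with hz
  set u := restr z S with hu
  have hus : sparse k u := sparse_restr z hS
  have huz : nrm u ^ 2 = u ⬝ᵥ z := by
    rw [nrm_sq]
    refine Finset.sum_congr rfl fun i _ => ?_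
    by_cases hi : i ∈ S <;> simp [hu, restr, hi]
  have hexp : u ⬝ᵥ z = (u ⬝ᵥ v - A.mulVec u ⬝ᵥ A.mulVec v) + A.mulVec u ⬝ᵥ η := by
    rw [hz, dotProduct_add, sub_mulVec, one_mulVec, dotProduct_sub, ← mulVec_mulVec,
      dotProduct_mulVec u Aᵀ, dotProduct_mulVec u Aᵀ, vecMul_transpose]
  have hB := dot_sub_dot_mulVec_le (r := k) (s := 2 * k)
    (by rwa [show k + 2 * k = 3 * k by ring]) hus hv
  have hAu : nrm (A.mulVec u) ≤ Real.sqrt (1 + δ₁) * nrm u := by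
    rw [← Real.sqrt_sq (nrm_nonneg u), ← Real.sqrt_mul (by linarith [h1.1])]
    exact Real.le_sqrt_of_sq_le (h1.2.2 u hus).2
  have hη := (dot_le_nrm_mul_nrm (A.mulVec u) η).trans
    (mul_le_mul_of_nonneg_right hAu (nrm_nonneg η))
  rcases (nrm_nonneg u).eq_or_lt with hu0 | hu0
  · rw [← hu0]
    exact add_nonneg (mul_nonneg h3.1 (nrm_nonneg _))
      (mul_nonneg (Real.sqrt_nonneg _) (nrm_nonneg _))
  · refine le_of_mul_le_mul_left ?_ hu0
    linarith

/-- A bound on all blocks of at most `k` indices passes, with factor `t`, to sets of at most `t * k`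
indices. -/
theorem nrm_restr_le_mul {n k : ℕ} (z : Fin n → ℝ) {C : ℝ}
    (hC : ∀ S : Finset (Fin n), S.card ≤ k → nrm (restr z S) ≤ C) (t : ℕ) :
    ∀ Ω : Finset (Fin n), Ω.card ≤ t * k → nrm (restr z Ω) ≤ t * C := by
  induction t with
  | zero =>
    intro Ω hΩ
    have : Ω = ∅ := Finset.card_eq_zero.1 (by simpa using hΩ)
    simp [this, restr, nrm]
  | succ t ih =>
    intro Ω hΩ
    obtain ⟨S, hSΩ, hS⟩ := Finset.exists_subset_card_eq (min_le_right k Ω.card)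
    have hcard : (Ω \ S).card ≤ t * k := by
      rw [Finset.card_sdiff_of_subset hSΩ, hS]
      rw [Nat.succ_mul] at hΩ
      omega
    have hsplit : restr z Ω = restr z (Ω \ S) + restr z S := by
      funext i
      by_cases hi : i ∈ S
      · simp [restr, hi, hSΩ hi]
      · simp [restr, hi]
    have h1 := ih _ hcard
    have h2 := hC S (hS.trans_le (min_le_left _ _))
    rw [hsplit]
    push_cast
    linarith [nrm_add_le (restr z (Ω \ S)) (restr z S)]

theorem stmt16 {m n : ℕ} (k q : ℕ) (hk : 0 < k) (hq : 0 < q)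
    (A : Matrix (Fin m) (Fin n) ℝ) (η : Fin m → ℝ)
    (t : ℕ) (ht : t = ⌈(q : ℝ) / (k : ℝ)⌉₊)
    (δ₁ δ₃ : ℝ) (h1 : RIC A k δ₁) (h3 : RIC A (3 * k) δ₃) (h13 : δ₁ ≤ δ₃)
    (v : Fin n → ℝ) (hv : sparse (2 * k) v)
    (Ω : Finset (Fin n)) (hΩ : Ω.card ≤ q) :
    nrm (restr (((1 : Matrix (Fin n) (Fin n) ℝ) - Aᵀ * A).mulVec v + Aᵀ.mulVec η) Ω) ≤
      (t : ℝ) * δ₃ * nrm v + (t : ℝ) * Real.sqrt (1 + δ₁) * nrm η := by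
  have hkR : (0 : ℝ) < k := Nat.cast_pos.2 hk
  have hqt : q ≤ t * k := by
    have h := Nat.le_ceil ((q : ℝ) / (k : ℝ))
    rw [← ht, div_le_iff₀ hkR] at h
    exact_mod_cast h
  have h := nrm_restr_le_mul _ (fun S hS => nrm_restr_block_le η h1 h3 hv hS) t Ω
    (hΩ.trans hqt)
  linarith
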